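/- Let n ≥ 2 and let D ⊆ ℚ^n be a Manaster–Remmel set. If ≺_1,...,≺_n are linear orders on D whose intersection is the restriction to D of the product order on ℚ^n, then there exist linear orders ≺*_1,...,≺*_n on ℚ^n such that each ≺*_i restricted to D equals ≺_i and the intersection of ≺*_1,...,≺*_n is the product order on ℚ^n. -/

import Mathlib

/-- `D ⊆ ℚ^n` is a Manaster–Remmel set: dense in the product topology, and any two
distinct points of `D` differ in every coordinate. -/
def MRSet (n : ℕ) (D : Set (Fin n → ℚ)) : Prop :=
  Dense D ∧ ∀ a ∈ D, ∀ b ∈ D, a ≠ b → ∀ i : Fin n, a i ≠ b i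

/-- The product (coordinatewise) strict order on `ℚ^n`. -/
def ProdLt {n : ℕ} (a b : Fin n → ℚ) : Prop :=
  (∀ i, a i ≤ b i) ∧ a ≠ b

theorem dense_box {n : ℕ} {D : Set (Fin n → ℚ)} (hD : Dense D) (lo hi : Fin n → ℚ)
    (h : ∀ i, lo i < hi i) : ∃ d : ↥D, ∀ i, lo i < d.1 i ∧ d.1 i < hi i := by
  have ho : IsOpen (Set.pi Set.univ (fun i => Set.Ioo (lo i) (hi i))) :=
    isOpen_set_pi Set.finite_univ (fun i _ => isOpen_Ioo)
  have hne : (Set.pi Set.univ (fun i => Set.Ioo (lo i) (hi i))).Nonempty :=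
    ⟨fun i => (lo i + hi i) / 2, fun i _ => ⟨by have := h i; dsimp only; linarith,
      by have := h i; dsimp only; linarith⟩⟩
  obtain ⟨d, hd, hd'⟩ := hD.exists_mem_open ho hne
  exact ⟨⟨d, hd⟩, fun i => hd' i trivial⟩

/-- A point of `D` with coordinate `k` in `(p, q)` and the others in `(r, r + 1)`. -/
theorem dense_spike {n : ℕ} {D : Set (Fin n → ℚ)} (hD : Dense D) (k : Fin n) (p q r : ℚ)
    (h : p < q) : ∃ d : ↥D, (p < d.1 k ∧ d.1 k < q) ∧
      ∀ l, l ≠ k → r < d.1 l ∧ d.1 l < r + 1 := by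
  obtain ⟨d, hd⟩ := dense_box hD (fun l => if l = k then p else r)
    (fun l => if l = k then q else r + 1) (fun l => by
      by_cases hl : l = k <;> simp [hl, h])
  refine ⟨d, by simpa using hd k, fun l hl => by simpa [hl] using hd l⟩

theorem coord_realizer (n : ℕ) (D : Set (Fin n → ℚ)) (hD : MRSet n D)
    (R : Fin n → ↥D → ↥D → Prop)
    (hR : ∀ i, IsStrictTotalOrder ↥D (R i))
    (hreal : ∀ a b : ↥D, ProdLt (a : Fin n → ℚ) (b : Fin n → ℚ) ↔ ∀ j, R j a b) :
    ∃ τ : Fin n → Fin n, Function.Bijective τ ∧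
      ∀ i, ∀ a b : ↥D, a.1 i < b.1 i → R (τ i) a b := by
  have tr : ∀ j a b c, R j a b → R j b c → R j a c := fun j a b c => (hR j).trans a b c
  have irr : ∀ j a, ¬ R j a a := fun j a => (hR j).irrefl a
  have up : ∀ (i : Fin n) (a b : ↥D), (∀ l, a.1 l < b.1 l) → ∀ j, R j a b := by
    intro i a b h
    refine (hreal a b).1 ⟨fun l => (h l).le, fun e => ?_⟩
    exact (h i).ne (congrFun e i)
  have inc : ∀ (i : Fin n) (y x : ↥D), y.1 i < x.1 i → ∃ j, R j y x := by
    intro i y x h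
    by_contra hc
    push Not at hc
    have h1 : ∀ j, R j x y := by
      intro j
      by_contra h2
      have := (hR j).trichotomous y x (hc j) h2
      rw [this] at h
      exact lt_irrefl _ h
    exact absurd (((hreal x y).2 h1).1 i) (not_le.2 h)
  choose y hy hy' using fun k : Fin n => dense_spike hD.1 k 0 1 4 (by norm_num)
  choose x hx hx' using fun k : Fin n => dense_spike hD.1 k 2 3 (-2) (by norm_num)
  have hxy : ∀ k l, k ≠ l → ∀ j, R j (x k) (y l) := by
    intro k l hkl
    refine up k _ _ (fun m => ?_)
    by_cases hk : m = k
    · subst hk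
      have := hx m
      have := hy' l m hkl
      linarith
    · by_cases hl : m = l
      · subst hl
        have := hy m
        have := hx' k m hk
        linarith
      · have := hx' k m hk
        have := hy' l m hl
        linarith
  choose τ hτ using fun k : Fin n => inc k (y k) (x k) (by have := hx k; have := hy k; linarith)
  have excl : ∀ j k l, R j (y k) (x k) → R j (y l) (x l) → k = l := by
    intro j k l h1 h2
    by_contra hkl
    exact irr j _ (tr j _ _ _ (tr j _ _ _ h1 (hxy k l hkl j))
      (tr j _ _ _ h2 (hxy l k (Ne.symm hkl) j)))
  have hinj : Function.Injective τ := by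
    intro k l h
    exact excl (τ k) k l (hτ k) (h ▸ hτ l)
  have hbij : Function.Bijective τ := Finite.injective_iff_bijective.1 hinj
  refine ⟨τ, hbij, fun i a b hab => ?_⟩
  obtain ⟨M, hM, ha, hb⟩ : ∃ M : ℚ, 10 ≤ M ∧ (∀ l, |a.1 l| ≤ M) ∧ (∀ l, |b.1 l| ≤ M) := by
    have e1 : ∀ l, |a.1 l| ≤ ∑ l, |a.1 l| := fun l =>
      Finset.single_le_sum (f := fun l => |a.1 l|) (fun _ _ => abs_nonneg _) (Finset.mem_univ l)
    have e2 : ∀ l, |b.1 l| ≤ ∑ l, |b.1 l| := fun l =>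
      Finset.single_le_sum (f := fun l => |b.1 l|) (fun _ _ => abs_nonneg _) (Finset.mem_univ l)
    have n1 := (abs_nonneg _).trans (e1 i)
    have n2 := (abs_nonneg _).trans (e2 i)
    refine ⟨10 + ∑ l, |a.1 l| + ∑ l, |b.1 l|, by linarith, fun l => ?_, fun l => ?_⟩
    · have := e1 l; linarith
    · have := e2 l; linarith
  obtain ⟨Y, hY, hY'⟩ := dense_spike hD.1 i (a.1 i) ((a.1 i + b.1 i) / 2) M (by linarith)
  obtain ⟨X, hX, hX'⟩ := dense_spike hD.1 i ((a.1 i + b.1 i) / 2) (b.1 i) (-M-1) (by linarith)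
  have haY : ∀ j, R j a Y := up i _ _ (fun m => by
    by_cases hm : m = i
    · subst hm; exact hY.1
    · have := hY' m hm; have := abs_le.1 (ha m); linarith)
  have hXb : ∀ j, R j X b := up i _ _ (fun m => by
    by_cases hm : m = i
    · subst hm; exact hX.2
    · have := hX' m hm; have := abs_le.1 (hb m); linarith)
  obtain ⟨j, hj⟩ := inc i Y X (by linarith)
  obtain ⟨k, rfl⟩ := hbij.2 j
  have hki : k = i := by
    by_contra hki
    obtain ⟨v, hv, hv'⟩ := dense_spike hD.1 k 1 (3/2) M (by norm_num)
    obtain ⟨u, hu, hu'⟩ := dense_spike hD.1 k (3/2) 2 (-M-1) (by norm_num)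
    have h1 : ∀ j, R j (y k) v := up i _ _ (fun m => by
      by_cases hm : m = k
      · subst hm; have := hy m; linarith
      · have := hv' m hm; have := hy' k m hm; linarith)
    have h2 : ∀ j, R j u (x k) := up i _ _ (fun m => by
      by_cases hm : m = k
      · subst hm; have := hx m; linarith
      · have := hu' m hm; have := hx' k m hm; linarith)
    obtain ⟨j, hvu⟩ := inc k v u (by linarith)
    obtain ⟨l, rfl⟩ := hbij.2 j
    have hkl : k = l := excl _ k l (tr _ _ _ _ (h1 _) (tr _ _ _ _ hvu (h2 _))) (hτ l)
    subst hkl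
    have h3 : ∀ j, R j X v := up i _ _ (fun m => by
      have := abs_le.1 (hb m)
      by_cases hm : m = k
      · subst hm; have := hX' m hki; linarith
      · have := hv' m hm
        by_cases hm' : m = i
        · subst hm'; linarith
        · have := hX' m hm'; linarith)
    have h4 : ∀ j, R j u Y := up i _ _ (fun m => by
      have := abs_le.1 (ha m)
      by_cases hm : m = k
      · subst hm; have := hY' m hki; linarith
      · have := hu' m hm
        by_cases hm' : m = i
        · subst hm'; linarith
        · have := hY' m hm'; linarith)
    exact irr _ _ (tr _ _ _ _ (tr _ _ _ _ hj (h3 _)) (tr _ _ _ _ hvu (h4 _)))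
  subst hki
  exact tr _ _ _ _ (haY _) (tr _ _ _ _ hj (hXb _))

/-- any realizers `≺_1, …, ≺_n` of the product order on a Manaster–Remmel set
`D` extend to realizers `≺*_1, …, ≺*_n` of the product order on all of `ℚ^n`. -/
theorem stmt_16 (n : ℕ) (hn : 2 ≤ n) (D : Set (Fin n → ℚ)) (hD : MRSet n D)
    (R : Fin n → ↥D → ↥D → Prop)
    (hR : ∀ i, IsStrictTotalOrder ↥D (R i))
    (hreal : ∀ a b : ↥D, ProdLt (a : Fin n → ℚ) (b : Fin n → ℚ) ↔ ∀ j, R j a b) :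
    ∃ S : Fin n → (Fin n → ℚ) → (Fin n → ℚ) → Prop,
      (∀ i, IsStrictTotalOrder (Fin n → ℚ) (S i)) ∧
      (∀ i : Fin n, ∀ a b : ↥D, S i (a : Fin n → ℚ) (b : Fin n → ℚ) ↔ R i a b) ∧
      (∀ a b : Fin n → ℚ, ProdLt a b ↔ ∀ j, S j a b) := by
  obtain ⟨τ, hbij, hτ⟩ := coord_realizer n D hD R hR hreal
  obtain ⟨ρ, -, hρ⟩ := Function.bijective_iff_has_inverse.1 hbij
  refine ⟨fun j a b => a (ρ j) < b (ρ j) ∨ (a (ρ j) = b (ρ j) ∧ toLex a < toLex b), ?_, ?_, ?_⟩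
  · intro j
    refine { trichotomous := ?_, irrefl := ?_, trans := ?_ }
    · intro a b h1 h2
      push Not at h1 h2
      have e : a (ρ j) = b (ρ j) := le_antisymm h2.1 h1.1
      exact toLex.injective (le_antisymm (not_lt.1 (h2.2 e.symm)) (not_lt.1 (h1.2 e)))
    · rintro a (h | h)
      · exact lt_irrefl _ h
      · exact lt_irrefl _ h.2
    · rintro a b c (h | h) (h' | h')
      · exact Or.inl (h.trans h')
      · exact Or.inl (h'.1 ▸ h)
      · exact Or.inl (h.1 ▸ h')
      · exact Or.inr ⟨h.1.trans h'.1, h.2.trans h'.2⟩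
  · intro j a b
    have key := hτ (ρ j)
    rw [hρ j] at key
    constructor
    · rintro (h | ⟨h, h'⟩)
      · exact key a b h
      · exfalso
        by_cases e : a.1 = b.1
        · rw [e] at h'; exact lt_irrefl _ h'
        · exact hD.2 a.1 a.2 b.1 b.2 e (ρ j) h
    · intro h
      left
      by_contra hc
      have hne : a ≠ b := by rintro rfl; exact (hR j).irrefl _ h
      have hne' : a.1 (ρ j) ≠ b.1 (ρ j) :=
        hD.2 a.1 a.2 b.1 b.2 (fun e => hne (Subtype.ext e)) (ρ j)
      have := key b a (lt_of_le_of_ne (not_lt.1 hc) hne'.symm)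
      exact (hR j).irrefl _ ((hR j).trans _ _ _ h this)
  · intro a b
    constructor
    · rintro ⟨h, hne⟩ j
      rcases (h (ρ j)).lt_or_eq with h1 | h1
      · exact Or.inl h1
      · exact Or.inr ⟨h1, Pi.toLex_strictMono (lt_of_le_of_ne h hne)⟩
    · intro h
      refine ⟨fun i => ?_, ?_⟩
      · obtain ⟨j, rfl⟩ : ∃ j, ρ j = i := ⟨τ i, hbij.1 (hρ _)⟩
        rcases h j with h1 | h1
        · exact h1.le
        · exact h1.1.le
      · rintro rfl
        rcases h ⟨0, by omega⟩ with h1 | h1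
        · exact lt_irrefl _ h1
        · exact lt_irrefl _ h1.2
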